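/- arXiv:2601.10864 — 3 statements merged into one kernel-verified Lean document; each statement's English description precedes it below -/
import Mathlib

section
/- Let x_1, …, x_d ∈ ℝ^n, let μ̂ = (1/d)∑_{i=1}^d x_i and Σ̂ = (1/d)∑_{i=1}^d (x_i − μ̂)(x_i − μ̂)ᵀ. If Σ̂ is invertible (equivalently, positive definite), then the pair (μ̂, Σ̂) maximizes the likelihood function (μ, Σ) ↦ ∏_{i=1}^d f_{μ,Σ}(x_i) over all μ ∈ ℝ^n and all real symmetric positive definite n×n matrices Σ. -/
open Matrix

noncomputable section

/-- The density of the `n`-variate Gaussian distribution with mean `μ` and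
covariance matrix `S`. -/
def gaussDensity {n : ℕ} (μ : Fin n → ℝ) (S : Matrix (Fin n) (Fin n) ℝ) (x : Fin n → ℝ) : ℝ :=
  Real.exp (-(1 / 2) * ((x - μ) ⬝ᵥ (S⁻¹).mulVec (x - μ))) /
    Real.sqrt ((2 * Real.pi) ^ n * S.det)

/-!
Write the log-likelihood in terms of the scatter matrix `∑ i, (x i - μ)(x i - μ)ᵀ`, on which the
quadratic exponents depend only through the trace against `S⁻¹`. Moving `μ` to the sample mean
removes a positive semidefinite rank one term from the scatter matrix, so `μ̂` is optimal for every
`S`. With `μ = μ̂`, it remains to compare the covariances `S` and `Σ̂`, i.e. to show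
`log det (S⁻¹ Σ̂) ≤ tr (S⁻¹ Σ̂) - n`; since `S⁻¹ Σ̂` has positive real eigenvalues, this is the
sum of the scalar inequalities `log t ≤ t - 1`, with equality at `S = Σ̂`.
-/

section Determinant

open scoped ComplexOrder MatrixOrder

variable {m 𝕜 : Type*} [Fintype m] [DecidableEq m] [RCLike 𝕜]

theorem re_det_le_exp_re_trace_sub_card {M : Matrix m m 𝕜} (hM : M.PosSemidef) :
    RCLike.re M.det ≤ Real.exp (RCLike.re M.trace - Fintype.card m) := by
  let eig := hM.isHermitian.eigenvalues
  have det_eq : RCLike.re M.det = ∏ i, eig i := by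
    rw [hM.isHermitian.det_eq_prod_eigenvalues, ← RCLike.ofReal_prod, RCLike.ofReal_re]
  have trace_eq : RCLike.re M.trace = ∑ i, eig i := by
    rw [hM.isHermitian.trace_eq_sum_eigenvalues, ← RCLike.ofReal_sum, RCLike.ofReal_re]
  calc RCLike.re M.det = ∏ i, eig i := det_eq
    _ ≤ ∏ i, Real.exp (eig i - 1) :=
        Finset.prod_le_prod (fun i _ => hM.eigenvalues_nonneg i) fun i _ => by
          simpa using Real.add_one_le_exp (eig i - 1)
    _ = Real.exp (RCLike.re M.trace - Fintype.card m) := by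
        rw [← Real.exp_sum, Finset.sum_sub_distrib, trace_eq]
        simp

theorem re_det_mul_le_exp_re_trace_mul_sub_card {A B : Matrix m m 𝕜}
    (hA : A.PosSemidef) (hB : B.PosSemidef) :
    RCLike.re (A * B).det ≤ Real.exp (RCLike.re (A * B).trace - Fintype.card m) := by
  -- `A * B` need not be Hermitian, but it has the determinant and trace of `C * A * Cᴴ`.
  obtain ⟨C, rfl⟩ : ∃ C, B = Cᴴ * C := CStarAlgebra.nonneg_iff_eq_star_mul_self.mp hB.nonneg
  have det_eq : (A * (Cᴴ * C)).det = (C * A * Cᴴ).det := by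
    simp only [det_mul]
    ring
  have trace_eq : (A * (Cᴴ * C)).trace = (C * A * Cᴴ).trace := by
    rw [← Matrix.mul_assoc, trace_mul_comm, Matrix.mul_assoc]
  rw [det_eq, trace_eq]
  exact re_det_le_exp_re_trace_sub_card (hA.mul_mul_conjTranspose_same C)

theorem sqrt_det_le_sqrt_det_mul_exp {S T : Matrix m m ℝ} (hS : S.PosDef) (hT : T.PosSemidef) :
    √T.det ≤ √S.det * Real.exp (((S⁻¹ * T).trace - Fintype.card m) / 2) := by
  have det_le : T.det ≤ S.det * Real.exp ((S⁻¹ * T).trace - Fintype.card m) := by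
    rw [← inv_mul_le_iff₀ hS.det_pos, ← Ring.inverse_eq_inv', ← det_nonsing_inv, ← det_mul]
    exact re_det_mul_le_exp_re_trace_mul_sub_card hS.inv.posSemidef hT
  rw [Real.exp_half, ← Real.sqrt_mul hS.det_pos.le]
  exact Real.sqrt_le_sqrt det_le

theorem exp_neg_half_trace_div_sqrt_det_le_self {S T : Matrix m m ℝ}
    (hS : S.PosDef) (hT : T.PosDef) :
    Real.exp (-(1 / 2) * (S⁻¹ * T).trace) / √S.det ≤
      Real.exp (-(1 / 2) * (T⁻¹ * T).trace) / √T.det := by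
  have sqrt_detS_pos := Real.sqrt_pos.mpr hS.det_pos
  have sqrt_detT_pos := Real.sqrt_pos.mpr hT.det_pos
  have trace_inv_mul_self : (T⁻¹ * T).trace = Fintype.card m := by
    rw [nonsing_inv_mul _ hT.det_pos.ne'.isUnit, trace_one]
  rw [trace_inv_mul_self, div_le_div_iff₀ sqrt_detS_pos sqrt_detT_pos]
  set t := (S⁻¹ * T).trace
  calc Real.exp (-(1 / 2) * t) * √T.det
      ≤ Real.exp (-(1 / 2) * t) * (√S.det * Real.exp ((t - Fintype.card m) / 2)) := by
        gcongr
        exact sqrt_det_le_sqrt_det_mul_exp hS hT.posSemidef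
    _ = Real.exp (-(1 / 2) * t + (t - Fintype.card m) / 2) * √S.det := by
        rw [Real.exp_add]
        ring
    _ = Real.exp (-(1 / 2) * Fintype.card m) * √S.det := by
        ring_nf

end Determinant

section OuterProduct

variable {ι m n R : Type*}

section Sum

variable [NonUnitalNonAssocSemiring R]

theorem sum_vecMulVec (s : Finset ι) (v : ι → m → R) (w : n → R) :
    vecMulVec (∑ i ∈ s, v i) w = ∑ i ∈ s, vecMulVec (v i) w := by
  ext j k
  simp [vecMulVec_apply, Matrix.sum_apply, Finset.sum_mul]

theorem vecMulVec_sum (s : Finset ι) (w : m → R) (v : ι → n → R) :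
    vecMulVec w (∑ i ∈ s, v i) = ∑ i ∈ s, vecMulVec w (v i) := by
  ext j k
  simp [vecMulVec_apply, Matrix.sum_apply, Finset.mul_sum]

end Sum

theorem trace_mul_vecMulVec [Fintype m] [Fintype n] [NonUnitalCommSemiring R]
    (A : Matrix m n R) (v : n → R) (w : m → R) :
    (A * vecMulVec v w).trace = w ⬝ᵥ A *ᵥ v := by
  rw [mul_vecMulVec, trace_vecMulVec, dotProduct_comm]

end OuterProduct

/-- The scatter matrix `∑ i, (x i - c)(x i - c)ᵀ` of a finite family of vectors about a centre `c`.
It is not divided by the number of vectors: the sample covariance matrix is the quotient of the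
scatter matrix about the sample mean by that number. -/
def scatterMatrix {ι m R : Type*} [Fintype ι] [NonUnitalNonAssocRing R]
    (x : ι → m → R) (c : m → R) : Matrix m m R :=
  ∑ i, vecMulVec (x i - c) (x i - c)

section Scatter

variable {ι m R : Type*} [Fintype ι]

theorem scatterMatrix_eq_add_card_smul_vecMulVec [NonUnitalNonAssocRing R]
    {x : ι → m → R} {mean : m → R} (hmean : ∑ i, x i = Fintype.card ι • mean) (c : m → R) :
    scatterMatrix x c =
      scatterMatrix x mean + Fintype.card ι • vecMulVec (mean - c) (mean - c) := by
  have sum_deviation : ∑ i, (x i - mean) = 0 := by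
    simp [Finset.sum_sub_distrib, hmean]
  have expand (i : ι) : vecMulVec (x i - c) (x i - c) =
      vecMulVec (x i - mean) (x i - mean) + vecMulVec (x i - mean) (mean - c) +
        vecMulVec (mean - c) (x i - mean) + vecMulVec (mean - c) (mean - c) := by
    rw [← sub_add_sub_cancel (x i) mean c]
    simp only [vecMulVec_add, add_vecMulVec]
    abel
  simp only [scatterMatrix, expand, Finset.sum_add_distrib, ← sum_vecMulVec, ← vecMulVec_sum,
    sum_deviation, zero_vecMulVec, vecMulVec_zero, add_zero, Finset.sum_const, Finset.card_univ]

theorem trace_mul_scatterMatrix [Fintype m] [NonUnitalCommRing R]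
    (A : Matrix m m R) (x : ι → m → R) (c : m → R) :
    (A * scatterMatrix x c).trace = ∑ i, (x i - c) ⬝ᵥ A *ᵥ (x i - c) := by
  simp only [scatterMatrix, Matrix.mul_sum, trace_sum, trace_mul_vecMulVec]

theorem posSemidef_scatterMatrix [Finite m] (x : ι → m → ℝ) (c : m → ℝ) :
    (scatterMatrix x c).PosSemidef :=
  posSemidef_sum _ fun i _ => by simpa using posSemidef_vecMulVec_self_star (x i - c)

theorem trace_mul_scatterMatrix_mean_le [Fintype m] {A : Matrix m m ℝ} (hA : A.PosSemidef)
    {x : ι → m → ℝ} {mean : m → ℝ} (hmean : ∑ i, x i = Fintype.card ι • mean) (c : m → ℝ) :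
    (A * scatterMatrix x mean).trace ≤ (A * scatterMatrix x c).trace := by
  have quadratic_nonneg : 0 ≤ (mean - c) ⬝ᵥ A *ᵥ (mean - c) := by
    simpa using hA.dotProduct_mulVec_nonneg (mean - c)
  rw [scatterMatrix_eq_add_card_smul_vecMulVec hmean c, Matrix.mul_add, trace_add, Matrix.mul_smul,
    trace_smul, trace_mul_vecMulVec]
  exact le_add_of_nonneg_right (nsmul_nonneg quadratic_nonneg _)

end Scatter

section Likelihood

variable {ι : Type*} [Fintype ι] {n : ℕ} {x : ι → Fin n → ℝ} {mean : Fin n → ℝ}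
  {S T : Matrix (Fin n) (Fin n) ℝ}

theorem prod_gaussDensity_eq (x : ι → Fin n → ℝ) (μ : Fin n → ℝ) (S : Matrix (Fin n) (Fin n) ℝ) :
    ∏ i, gaussDensity μ S (x i) =
      Real.exp (-(1 / 2) * (S⁻¹ * scatterMatrix x μ).trace) /
        √((2 * Real.pi) ^ n * S.det) ^ Fintype.card ι := by
  simp only [gaussDensity, Finset.prod_div_distrib, ← Real.exp_sum, ← Finset.mul_sum,
    trace_mul_scatterMatrix, Finset.prod_const, Finset.card_univ]

theorem prod_gaussDensity_le_mean (hS : S.PosDef) (hmean : ∑ i, x i = Fintype.card ι • mean)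
    (μ : Fin n → ℝ) :
    ∏ i, gaussDensity μ S (x i) ≤ ∏ i, gaussDensity mean S (x i) := by
  have trace_le := trace_mul_scatterMatrix_mean_le hS.inv.posSemidef hmean μ
  rw [prod_gaussDensity_eq, prod_gaussDensity_eq]
  gcongr ?_ / _
  exact Real.exp_le_exp.mpr (by linarith)

theorem prod_gaussDensity_eq_pow_of_scatterMatrix_eq
    (hscatter : scatterMatrix x mean = Fintype.card ι • T) (S : Matrix (Fin n) (Fin n) ℝ) :
    ∏ i, gaussDensity mean S (x i) =
      (Real.exp (-(1 / 2) * (S⁻¹ * T).trace) / √((2 * Real.pi) ^ n * S.det)) ^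
        Fintype.card ι := by
  rw [prod_gaussDensity_eq, hscatter, Matrix.mul_smul, trace_smul, nsmul_eq_mul, mul_left_comm,
    Real.exp_nat_mul, div_pow]

theorem prod_gaussDensity_le_covariance (hS : S.PosDef) (hT : T.PosDef)
    (hscatter : scatterMatrix x mean = Fintype.card ι • T) :
    ∏ i, gaussDensity mean S (x i) ≤ ∏ i, gaussDensity mean T (x i) := by
  have two_pi_pow_nonneg : 0 ≤ (2 * Real.pi) ^ n := by positivity
  simp only [prod_gaussDensity_eq_pow_of_scatterMatrix_eq hscatter,
    Real.sqrt_mul two_pi_pow_nonneg, div_mul_eq_div_div_swap]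
  gcongr ?_ ^ _
  exact div_le_div_of_nonneg_right (exp_neg_half_trace_div_sqrt_det_le_self hS hT)
    (Real.sqrt_nonneg _)

end Likelihood

/-- If the sample covariance matrix `Σ̂` is invertible (equivalently, positive definite),
then the pair `(μ̂, Σ̂)` of sample mean and sample covariance maximizes the Gaussian
likelihood over all means `μ` and positive definite covariance matrices `Σ`. -/
theorem sample_mean_cov_maximize_likelihood (n d : ℕ) (hd : 0 < d)
    (x : Fin d → Fin n → ℝ)
    (muHat : Fin n → ℝ) (hmu : muHat = (d : ℝ)⁻¹ • ∑ i, x i)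
    (SigHat : Matrix (Fin n) (Fin n) ℝ)
    (hSig : SigHat = (d : ℝ)⁻¹ • ∑ i, vecMulVec (x i - muHat) (x i - muHat))
    (hinv : IsUnit SigHat.det) :
    SigHat.PosDef ∧
      ∀ (μ : Fin n → ℝ) (S : Matrix (Fin n) (Fin n) ℝ), S.PosDef →
        ∏ i, gaussDensity μ S (x i) ≤ ∏ i, gaussDensity muHat SigHat (x i) := by
  have hd0 : (d : ℝ) ≠ 0 := by positivity
  have hmean : ∑ i, x i = Fintype.card (Fin d) • muHat := by
    rw [Fintype.card_fin, ← Nat.cast_smul_eq_nsmul ℝ, hmu, smul_inv_smul₀ hd0]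
  have hscatter : scatterMatrix x muHat = Fintype.card (Fin d) • SigHat := by
    rw [Fintype.card_fin, ← Nat.cast_smul_eq_nsmul ℝ, hSig, smul_inv_smul₀ hd0, scatterMatrix]
  have hSigHat : SigHat.PosDef := by
    have hpsd : SigHat.PosSemidef :=
      hSig ▸ (posSemidef_scatterMatrix x muHat).smul (by positivity)
    exact hpsd.posDef_iff_isUnit.mpr ((isUnit_iff_isUnit_det _).mpr hinv)
  exact ⟨hSigHat, fun μ S hS => (prod_gaussDensity_le_mean hS hmean μ).trans
    (prod_gaussDensity_le_covariance hS hSigHat hscatter)⟩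
end
end

section
/- (Dempster) Let G be a simple graph on vertex set {1,…,n}. Then MLT(G) equals the minimum positive integer d such that for Lebesgue-almost every real n×d matrix X, setting S = X Xᵀ, there exists a real symmetric positive definite n×n matrix T with T_{ii} = S_{ii} for all i ∈ {1,…,n} and T_{ij} = S_{ij} for all edges ij ∈ E(G). -/
open MeasureTheory Matrix

noncomputable section

/-- The objective function `K ↦ tr(S K) − log det K` of Gaussian maximum likelihood,
where `S` is the sample covariance matrix. -/
def mlObjective {n : ℕ} (S K : Matrix (Fin n) (Fin n) ℝ) : ℝ :=
  (S * K).trace - Real.log K.det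

/-- The maximum likelihood threshold of a set `M` of positive definite matrices:
the smallest positive integer `d` such that for Lebesgue-almost every real `n × d`
matrix `X`, the function `K ↦ tr(X Xᵀ K) − log det K` attains a minimum on `M`. -/
def mlt (n : ℕ) (M : Set (Matrix (Fin n) (Fin n) ℝ)) : ℕ :=
  sInf {d : ℕ | 0 < d ∧
    ∀ᵐ X : Fin n → Fin d → ℝ ∂volume,
      ∃ K ∈ M, ∀ K' ∈ M,
        mlObjective (Matrix.of X * (Matrix.of X)ᵀ) K ≤
          mlObjective (Matrix.of X * (Matrix.of X)ᵀ) K'}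

/-- The Gaussian graphical model of a graph `G` on `{1,…,n}`: all symmetric positive
definite matrices whose off-diagonal entries vanish at non-edges of `G`. -/
def graphModel (n : ℕ) (G : SimpleGraph (Fin n)) : Set (Matrix (Fin n) (Fin n) ℝ) :=
  {K | K.PosDef ∧ ∀ i j, i ≠ j → ¬ G.Adj i j → K i j = 0}

/-!
The model of a graph consists of the positive definite matrices in a linear subspace `L`, and the
argument works for every `L` that contains a positive definite matrix. A positive definite matrix
`T` completes `S` if and only if `tr (T K) = tr (S K)` for all `K` in the model.

If `K` minimizes `K ↦ tr (S K) - log det K` on the model, then for every `E` in the model the line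
`K + t E` stays in the model for small `t` of either sign, so the derivative
`tr (S E) - tr (K⁻¹ E)` at `t = 0` vanishes, and `K⁻¹` completes `S`. Conversely, a completion `T`
defines the same objective as `S` on the model, and for `T ≥ c > 0` the bounds `tr (T K) ≥ c tr K`
and `log det K ≤ ε tr K - n (1 + log ε)` with `ε = c / 2` make the sublevel sets of this objective
compact.
-/

open Filter Topology
open scoped ComplexOrder

section RCLike

variable {ι 𝕜 : Type*} [RCLike 𝕜] {A B K E : Matrix ι ι 𝕜}

lemma posDef_iff_re_dotProduct_mulVec_pos_on_sphere [Fintype ι] (hA : A.IsHermitian) :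
    A.PosDef ↔ ∀ x ∈ Metric.sphere (0 : ι → 𝕜) 1, 0 < RCLike.re (star x ⬝ᵥ (A *ᵥ x)) := by
  refine ⟨fun h x hx => h.re_dotProduct_pos (ne_zero_of_mem_unit_sphere ⟨x, hx⟩),
    fun h => .of_dotProduct_mulVec_pos hA fun x hx => ?_⟩
  have hnorm : 0 < ‖x‖⁻¹ := inv_pos.2 (norm_pos_iff.2 hx)
  have hunit := h ((‖x‖⁻¹ : ℝ) • x) (by simp [norm_smul, hx])
  have hre : 0 < RCLike.re (star x ⬝ᵥ (A *ᵥ x)) := by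
    simpa only [star_smul, star_trivial, mulVec_smul, dotProduct_smul, smul_dotProduct,
      RCLike.smul_re, mul_pos_iff_of_pos_left hnorm] using hunit
  exact RCLike.pos_iff.2 ⟨hre, hA.im_star_dotProduct_mulVec_self x⟩

lemma eventually_posDef_of_isHermitian [Finite ι] (hK : K.PosDef) :
    ∀ᶠ A in 𝓝 K, A.IsHermitian → A.PosDef := by
  cases nonempty_fintype ι
  have hsphere : ∀ᶠ A in 𝓝 K, ∀ x ∈ Metric.sphere (0 : ι → 𝕜) 1,
      0 < RCLike.re (star x ⬝ᵥ (A *ᵥ x)) := by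
    refine (isCompact_sphere _ _).eventually_forall_of_forall_eventually fun x hx => ?_
    have hcont : Continuous fun p : Matrix ι ι 𝕜 × (ι → 𝕜) =>
        RCLike.re (star p.2 ⬝ᵥ (p.1 *ᵥ p.2)) := by fun_prop
    exact hcont.continuousAt.eventually (lt_mem_nhds
      ((posDef_iff_re_dotProduct_mulVec_pos_on_sphere hK.isHermitian).1 hK x hx))
  filter_upwards [hsphere] with A hpos hA
  exact (posDef_iff_re_dotProduct_mulVec_pos_on_sphere hA).2 hpos

lemma eventually_posDef_add_smul [Finite ι] (hK : K.PosDef) (hE : E.IsHermitian) :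
    ∀ᶠ t : ℝ in 𝓝 0, (K + t • E).PosDef := by
  have hline : Tendsto (fun t : ℝ => K + t • E) (𝓝 0) (𝓝 K) := by
    have hcont : Continuous fun t : ℝ => K + t • E := by fun_prop
    simpa using hcont.tendsto 0
  filter_upwards [hline.eventually (eventually_posDef_of_isHermitian hK)] with t ht
  exact ht (hK.isHermitian.add (hE.smul (IsSelfAdjoint.all t)))

lemma exists_pos_posSemidef_sub_smul_one [Finite ι] [DecidableEq ι] (hK : K.PosDef) :
    ∃ c : ℝ, 0 < c ∧ (K - c • (1 : Matrix ι ι 𝕜)).PosSemidef := by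
  have hsmall := eventually_posDef_add_smul hK (E := -1) isHermitian_one.neg
  obtain ⟨c, hposDef, hc⟩ :=
    ((hsmall.filter_mono nhdsWithin_le_nhds).and (self_mem_nhdsWithin (s := Set.Ioi 0))).exists
  exact ⟨c, hc, by simpa [sub_eq_add_neg] using hposDef.posSemidef⟩

open scoped MatrixOrder in
lemma trace_mul_nonneg_of_posSemidef [Fintype ι] (hA : A.PosSemidef) (hB : B.PosSemidef) :
    0 ≤ (A * B).trace := by
  classical
  obtain ⟨C, rfl⟩ := CStarAlgebra.nonneg_iff_eq_star_mul_self.1 hB.nonneg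
  rw [star_eq_conjTranspose, ← Matrix.mul_assoc, trace_mul_comm, ← Matrix.mul_assoc]
  exact (hA.mul_mul_conjTranspose_same C).trace_nonneg

lemma norm_apply_sq_le_of_posSemidef [Finite ι] (hA : A.PosSemidef) (i j : ι) :
    ‖A i j‖ ^ 2 ≤ RCLike.re (A i i) * RCLike.re (A j j) := by
  have hminor : 0 ≤ (A.submatrix ![i, j] ![i, j]).det := (hA.submatrix _).det_nonneg
  have hi := hA.isHermitian.coe_re_apply_self i
  have hj := hA.isHermitian.coe_re_apply_self j
  rw [det_fin_two] at hminor
  simp only [submatrix_apply, cons_val_zero, cons_val_one] at hminor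
  rw [← hA.isHermitian.apply j i, RCLike.star_def, RCLike.mul_conj, ← hi, ← hj] at hminor
  exact_mod_cast sub_nonneg.1 hminor

lemma norm_apply_le_re_trace_of_posSemidef [Fintype ι] (hA : A.PosSemidef) (i j : ι) :
    ‖A i j‖ ≤ RCLike.re A.trace := by
  have hnonneg (k : ι) : 0 ≤ RCLike.re (A k k) := (RCLike.nonneg_iff.1 hA.diag_nonneg).1
  have hdiag (k : ι) : RCLike.re (A k k) ≤ RCLike.re A.trace := by
    rw [trace, map_sum]
    exact Finset.single_le_sum (f := fun l => RCLike.re (A l l)) (fun l _ => hnonneg l)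
      (Finset.mem_univ k)
  refine le_of_sq_le_sq ?_ ((hnonneg i).trans (hdiag i))
  calc ‖A i j‖ ^ 2 ≤ RCLike.re (A i i) * RCLike.re (A j j) := norm_apply_sq_le_of_posSemidef hA i j
    _ ≤ RCLike.re A.trace ^ 2 := by
      rw [sq]
      exact mul_le_mul (hdiag i) (hdiag j) (hnonneg j) ((hnonneg i).trans (hdiag i))

lemma isClosed_setOf_posSemidef [Finite ι] : IsClosed {A : Matrix ι ι 𝕜 | A.PosSemidef} := by
  cases nonempty_fintype ι
  simp only [posSemidef_iff_dotProduct_mulVec, Set.ofPred_and, Set.ofPred_forall]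
  refine (isClosed_eq (by fun_prop) continuous_id).inter (isClosed_iInter fun x => ?_)
  exact isClosed_le continuous_const (by fun_prop)

lemma isCompact_setOf_posSemidef_re_trace_le [Fintype ι] (r : ℝ) :
    IsCompact {A : Matrix ι ι 𝕜 | A.PosSemidef ∧ RCLike.re A.trace ≤ r} := by
  have hbox : IsCompact (Set.univ.pi fun _ : ι => Set.univ.pi fun _ : ι =>
      Metric.closedBall (0 : 𝕜) r) :=
    isCompact_univ_pi fun _ => isCompact_univ_pi fun _ => isCompact_closedBall _ _
  refine hbox.of_isClosed_subset
    (isClosed_setOf_posSemidef.inter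
      (isClosed_le (RCLike.continuous_re.comp (by fun_prop)) continuous_const)) ?_
  rintro A ⟨hA, hr⟩ i - j -
  simpa using (norm_apply_le_re_trace_of_posSemidef hA i j).trans hr

lemma log_re_det_le [Fintype ι] [DecidableEq ι] (hK : K.PosDef) {ε : ℝ} (hε : 0 < ε) :
    Real.log (RCLike.re K.det) ≤
      ε * RCLike.re K.trace - Fintype.card ι * (1 + Real.log ε) := by
  have heig (i : ι) : Real.log (hK.1.eigenvalues i) ≤
      ε * hK.1.eigenvalues i - (1 + Real.log ε) := by
    have hpos := hK.eigenvalues_pos i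
    have htangent := Real.log_le_sub_one_of_pos (mul_pos hε hpos)
    rw [Real.log_mul hε.ne' hpos.ne'] at htangent
    linarith
  rw [hK.1.det_eq_prod_eigenvalues, hK.1.trace_eq_sum_eigenvalues, ← RCLike.ofReal_prod,
    ← RCLike.ofReal_sum, RCLike.ofReal_re, RCLike.ofReal_re,
    Real.log_prod fun i _ => (hK.eigenvalues_pos i).ne']
  calc ∑ i, Real.log (hK.1.eigenvalues i)
      ≤ ∑ i, (ε * hK.1.eigenvalues i - (1 + Real.log ε)) := Finset.sum_le_sum fun i _ => heig i
    _ = ε * ∑ i, hK.1.eigenvalues i - Fintype.card ι * (1 + Real.log ε) := by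
      simp [Finset.sum_sub_distrib, Finset.mul_sum, mul_add]

end RCLike

lemma hasDerivAt_det_add_smul {ι 𝕜 : Type*} [Fintype ι] [DecidableEq ι]
    [NontriviallyNormedField 𝕜] {A : Matrix ι ι 𝕜} (hA : IsUnit A.det) (B : Matrix ι ι 𝕜) :
    HasDerivAt (fun t : 𝕜 => (A + t • B).det) (A.det * (A⁻¹ * B).trace) 0 := by
  have hfactor (t : 𝕜) : A + t • B = A * (1 + t • (A⁻¹ * B)) := by
    rw [Matrix.mul_add, Matrix.mul_smul, mul_nonsing_inv_cancel_left _ _ hA, Matrix.mul_one]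
  obtain ⟨p, hp⟩ : ∃ p : Polynomial 𝕜, ∀ t : 𝕜,
      (A + t • B).det = A.det * (1 + (A⁻¹ * B).trace * t + p.eval t * t ^ 2) :=
    ⟨_, fun t => by rw [hfactor, det_mul, det_one_add_smul]⟩
  rw [funext hp]
  have hlinear := ((hasDerivAt_id (0 : 𝕜)).const_mul (A⁻¹ * B).trace).const_add 1
  have hquadratic := (p.hasDerivAt 0).mul ((hasDerivAt_id (0 : 𝕜)).pow 2)
  simpa using (hlinear.add hquadratic).const_mul A.det

section Objective

variable {n : ℕ} {T K : Matrix (Fin n) (Fin n) ℝ}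

lemma hasDerivAt_mlObjective_add_smul (S E : Matrix (Fin n) (Fin n) ℝ) (hK : IsUnit K.det) :
    HasDerivAt (fun t : ℝ => mlObjective S (K + t • E)) ((S * E).trace - (K⁻¹ * E).trace) 0 := by
  have hlog := (hasDerivAt_det_add_smul hK E).log (by simpa using hK.ne_zero)
  have htrace : HasDerivAt (fun t : ℝ => (S * (K + t • E)).trace) (S * E).trace 0 := by
    simp only [Matrix.mul_add, Matrix.mul_smul, trace_add, trace_smul, smul_eq_mul]
    simpa using ((hasDerivAt_id (0 : ℝ)).mul_const (S * E).trace).const_add (S * K).trace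
  refine (htrace.sub hlog).congr_deriv ?_
  simp [mul_div_cancel_left₀ _ hK.ne_zero]

lemma continuousOn_mlObjective (S : Matrix (Fin n) (Fin n) ℝ) :
    ContinuousOn (mlObjective S) {K | K.det ≠ 0} :=
  ContinuousOn.sub (by fun_prop) (ContinuousOn.log (by fun_prop) fun _ hK => hK)

lemma neg_log_det_le_mlObjective (hT : T.PosSemidef) (hK : K.PosSemidef) :
    -Real.log K.det ≤ mlObjective T K := by
  rw [mlObjective]
  linarith [trace_mul_nonneg_of_posSemidef hT hK]

lemma mul_trace_add_le_mlObjective {c : ℝ} (hc : 0 < c)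
    (hT : (T - c • (1 : Matrix (Fin n) (Fin n) ℝ)).PosSemidef) (hK : K.PosDef) :
    c / 2 * K.trace + n * (1 + Real.log (c / 2)) ≤ mlObjective T K := by
  have htrace : c * K.trace ≤ (T * K).trace := by
    simpa [Matrix.sub_mul] using trace_mul_nonneg_of_posSemidef hT hK.posSemidef
  have hlog := log_re_det_le hK (half_pos hc)
  simp only [RCLike.re_to_real, Fintype.card_fin] at hlog
  rw [mlObjective]
  linarith

lemma isCompact_mlObjective_sublevel (hT : T.PosDef) (r : ℝ) :
    IsCompact {K | K.PosDef ∧ mlObjective T K ≤ r} := by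
  obtain ⟨c, hc, hcT⟩ := exists_pos_posSemidef_sub_smul_one hT
  set b := (r - n * (1 + Real.log (c / 2))) / (c / 2) with hb
  set C : Set (Matrix (Fin n) (Fin n) ℝ) :=
    {K | K.PosSemidef ∧ K.trace ≤ b} ∩ {K | Real.exp (-r) ≤ K.det}
  have hC : IsCompact C := (isCompact_setOf_posSemidef_re_trace_le b).inter_right
    (isClosed_le continuous_const (by fun_prop))
  have hdet {K} (hK : K ∈ C) : K.det ≠ 0 := ((Real.exp_pos _).trans_le hK.2).ne'
  have hsublevel : {K | K.PosDef ∧ mlObjective T K ≤ r} = C ∩ mlObjective T ⁻¹' Set.Iic r := by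
    ext K
    refine ⟨fun ⟨hK, hr⟩ => ⟨⟨⟨hK.posSemidef, ?_⟩, ?_⟩, hr⟩,
      fun ⟨hK, hr⟩ => ⟨hK.1.1.posDef_iff_det_ne_zero.2 (hdet hK), hr⟩⟩
    · rw [hb, le_div_iff₀ (half_pos hc)]
      linarith [mul_trace_add_le_mlObjective hc hcT hK]
    · rw [Set.mem_ofPred_eq, ← Real.le_log_iff_exp_le hK.det_pos]
      linarith [neg_log_det_le_mlObjective hT.posSemidef hK.posSemidef]
  have hcont : ContinuousOn (mlObjective T) C := (continuousOn_mlObjective T).mono fun _ => hdet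
  rw [hsublevel]
  exact hC.of_isClosed_subset (hcont.preimage_isClosed_of_isClosed hC.isClosed isClosed_Iic)
    Set.inter_subset_left

lemma exists_isMinOn_mlObjective (hT : T.PosDef) {F : Set (Matrix (Fin n) (Fin n) ℝ)}
    (hF : IsClosed F) (hne : ∃ K ∈ F, K.PosDef) :
    ∃ K ∈ {K | K.PosDef ∧ K ∈ F}, IsMinOn (mlObjective T) {K | K.PosDef ∧ K ∈ F} K := by
  obtain ⟨K₀, hK₀F, hK₀⟩ := hne
  obtain ⟨K, ⟨⟨hK, hle⟩, hKF⟩, hmin⟩ :=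
    ((isCompact_mlObjective_sublevel hT (mlObjective T K₀)).inter_right hF).exists_isMinOn
      ⟨K₀, ⟨hK₀, le_rfl⟩, hK₀F⟩
      ((continuousOn_mlObjective T).mono fun _ hK => hK.1.1.det_pos.ne')
  refine ⟨K, ⟨hK, hKF⟩, isMinOn_iff.2 fun K' ⟨hK', hK'F⟩ => ?_⟩
  rcases le_total (mlObjective T K') (mlObjective T K₀) with h | h
  · exact isMinOn_iff.1 hmin K' ⟨⟨hK', h⟩, hK'F⟩
  · exact hle.trans h

end Objective

/-- The linear concentration model of a space `L` of matrices: the positive definite matrices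
in `L`. The elements of `L` need not be symmetric. -/
def linearModel {n : ℕ} (L : Submodule ℝ (Matrix (Fin n) (Fin n) ℝ)) :
    Set (Matrix (Fin n) (Fin n) ℝ) :=
  {K | K.PosDef ∧ K ∈ L}

section LinearModel

variable {n : ℕ} {L : Submodule ℝ (Matrix (Fin n) (Fin n) ℝ)} {S K E : Matrix (Fin n) (Fin n) ℝ}

lemma trace_inv_mul_eq_of_isMinOn (hK : K ∈ linearModel L)
    (hmin : IsMinOn (mlObjective S) (linearModel L) K) (hE : E ∈ linearModel L) :
    (K⁻¹ * E).trace = (S * E).trace := by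
  have hlocal : IsLocalMin (fun t : ℝ => mlObjective S (K + t • E)) 0 := by
    filter_upwards [eventually_posDef_add_smul hK.1 hE.1.isHermitian] with t ht
    simpa using isMinOn_iff.1 hmin (K + t • E) ⟨ht, L.add_mem hK.2 (L.smul_mem t hE.2)⟩
  exact (sub_eq_zero.1 (hlocal.hasDerivAt_eq_zero
    (hasDerivAt_mlObjective_add_smul S E hK.1.det_pos.ne'.isUnit))).symm

lemma exists_isMinOn_mlObjective_iff (hL : (linearModel L).Nonempty) :
    (∃ K ∈ linearModel L, IsMinOn (mlObjective S) (linearModel L) K) ↔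
      ∃ T : Matrix (Fin n) (Fin n) ℝ, T.PosDef ∧
        ∀ K ∈ linearModel L, (T * K).trace = (S * K).trace := by
  constructor
  · rintro ⟨K, hK, hmin⟩
    exact ⟨K⁻¹, hK.1.inv, fun E hE => trace_inv_mul_eq_of_isMinOn hK hmin hE⟩
  · rintro ⟨T, hT, htrace⟩
    have hobj : Set.EqOn (mlObjective T) (mlObjective S) (linearModel L) := fun K hK => by
      rw [mlObjective, mlObjective, htrace K hK]
    obtain ⟨K₀, hK₀, hK₀L⟩ := hL
    obtain ⟨K, hK, hmin⟩ :=
      exists_isMinOn_mlObjective hT L.closed_of_finiteDimensional ⟨K₀, hK₀L, hK₀⟩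
    exact ⟨K, hK, hmin.congr (eventually_principal.2 hobj) (hobj hK)⟩

end LinearModel

theorem mlt_eq_min_completion_general (n : ℕ) (L : Submodule ℝ (Matrix (Fin n) (Fin n) ℝ))
    (hL : (linearModel L).Nonempty) :
    mlt n (linearModel L) =
      sInf {d : ℕ | 0 < d ∧
        ∀ᵐ X : Fin n → Fin d → ℝ ∂volume,
          ∃ T : Matrix (Fin n) (Fin n) ℝ, T.PosDef ∧
            ∀ K ∈ linearModel L,
              (T * K).trace = (Matrix.of X * (Matrix.of X)ᵀ * K).trace} := by
  simp only [mlt, ← isMinOn_iff, exists_isMinOn_mlObjective_iff hL]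

/-- The space of matrices whose off-diagonal entries vanish at the non-edges of `G`. Its linear
model is the Gaussian graphical model of `G`. -/
def edgeSubmodule {ι : Type*} (R : Type*) [Semiring R] (G : SimpleGraph ι) :
    Submodule R (Matrix ι ι R) where
  carrier := {K | ∀ i j, i ≠ j → ¬ G.Adj i j → K i j = 0}
  zero_mem' _ _ _ _ := rfl
  add_mem' hK hL i j hij hadj := by simp [hK i j hij hadj, hL i j hij hadj]
  smul_mem' c K hK i j hij hadj := by simp [hK i j hij hadj]

section Graph

variable {ι R : Type*} {G : SimpleGraph ι}

lemma trace_mul_eq_of_mem_edgeSubmodule [Fintype ι] [Semiring R] {S T K : Matrix ι ι R}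
    (hK : K ∈ edgeSubmodule R G) (hdiag : ∀ i, T i i = S i i)
    (hedge : ∀ i j, G.Adj i j → T i j = S i j) : (T * K).trace = (S * K).trace := by
  simp only [trace, diag_apply, mul_apply]
  refine Finset.sum_congr rfl fun i _ => Finset.sum_congr rfl fun j _ => ?_
  by_cases hij : j = i
  · rw [hij, hdiag]
  by_cases hadj : G.Adj j i
  · rw [hedge i j hadj.symm]
  · rw [hK j i hij hadj, mul_zero, mul_zero]

variable [DecidableEq ι]

lemma one_mem_edgeSubmodule [Semiring R] : (1 : Matrix ι ι R) ∈ edgeSubmodule R G :=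
  fun _ _ hij _ => one_apply_ne hij

lemma vecMulVec_single_add_single_mem_edgeSubmodule [Semiring R] {i j : ι}
    (hij : i = j ∨ G.Adj i j) :
    vecMulVec (Pi.single i 1 + Pi.single j 1) (Pi.single i 1 + Pi.single j 1) ∈
      edgeSubmodule R G := by
  intro a b hab hadj
  have hsymm : ¬ G.Adj b a := fun h => hadj h.symm
  simp only [vecMulVec_apply, Pi.add_apply, Pi.single_apply]
  grind

lemma trace_mul_vecMulVec_single_add_single [Fintype ι] [CommSemiring R] {A : Matrix ι ι R}
    (hA : A.IsSymm) (i j : ι) :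
    (A * vecMulVec (Pi.single i 1 + Pi.single j 1) (Pi.single i 1 + Pi.single j 1)).trace =
      A i i + 2 * A i j + A j j := by
  have hji : A j i = A i j := hA.apply i j
  simp [mul_vecMulVec, trace_vecMulVec, mulVec_add, dotProduct_add, hji]
  ring

end Graph

lemma isSymm_mul_transpose {ι κ R : Type*} [Fintype κ] [NonUnitalCommSemiring R]
    (A : Matrix ι κ R) : (A * Aᵀ).IsSymm := by
  rw [IsSymm, transpose_mul, transpose_transpose]

lemma graphModel_eq_linearModel (n : ℕ) (G : SimpleGraph (Fin n)) :
    graphModel n G = linearModel (edgeSubmodule ℝ G) := rfl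

lemma one_mem_linearModel_edgeSubmodule {n : ℕ} (G : SimpleGraph (Fin n)) :
    (1 : Matrix (Fin n) (Fin n) ℝ) ∈ linearModel (edgeSubmodule ℝ G) :=
  ⟨.one, one_mem_edgeSubmodule⟩

lemma forall_trace_mul_eq_iff {n : ℕ} {G : SimpleGraph (Fin n)} {S T : Matrix (Fin n) (Fin n) ℝ}
    (hS : S.IsSymm) (hT : T.IsSymm) :
    (∀ K ∈ linearModel (edgeSubmodule ℝ G), (T * K).trace = (S * K).trace) ↔
      (∀ i, T i i = S i i) ∧ ∀ i j, G.Adj i j → T i j = S i j := by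
  refine ⟨fun h => ?_, fun ⟨hdiag, hedge⟩ K hK =>
    trace_mul_eq_of_mem_edgeSubmodule hK.2 hdiag hedge⟩
  -- Pairing with `1 + v vᵀ`, where `v = eᵢ + eⱼ`, isolates the `(i, j)` entry up to the diagonal.
  have hprobe (i j : Fin n) (hij : i = j ∨ G.Adj i j) :
      T i i + 2 * T i j + T j j = S i i + 2 * S i j + S j j := by
    set v : Fin n → ℝ := Pi.single i 1 + Pi.single j 1 with hv
    have hone := h 1 (one_mem_linearModel_edgeSubmodule G)
    have hadd := h (1 + vecMulVec v v)
      ⟨PosDef.one.add_posSemidef (posSemidef_vecMulVec_self_star v),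
        add_mem one_mem_edgeSubmodule (vecMulVec_single_add_single_mem_edgeSubmodule hij)⟩
    rw [Matrix.mul_add, Matrix.mul_add, trace_add, trace_add, hone, add_right_inj] at hadd
    rwa [hv, trace_mul_vecMulVec_single_add_single hS,
      trace_mul_vecMulVec_single_add_single hT] at hadd
  have hdiag (i : Fin n) : T i i = S i i := by linarith [hprobe i i (.inl rfl)]
  exact ⟨hdiag, fun i j hij => by linarith [hprobe i j (.inr hij), hdiag i, hdiag j]⟩

lemma exists_posDef_completion_iff {n : ℕ} {G : SimpleGraph (Fin n)}
    {S : Matrix (Fin n) (Fin n) ℝ} (hS : S.IsSymm) :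
    (∃ T : Matrix (Fin n) (Fin n) ℝ, T.PosDef ∧
        ∀ K ∈ linearModel (edgeSubmodule ℝ G), (T * K).trace = (S * K).trace) ↔
      ∃ T : Matrix (Fin n) (Fin n) ℝ, T.PosDef ∧
        (∀ i, T i i = S i i) ∧ ∀ i j, G.Adj i j → T i j = S i j :=
  exists_congr fun _ => and_congr_right fun hT =>
    forall_trace_mul_eq_iff hS (isHermitian_iff_isSymm.1 hT.isHermitian)

/-- Dempster's characterization: `MLT(G)` is the minimum positive integer `d` such that
for almost every real `n × d` matrix `X`, with `S = X Xᵀ`, there is a symmetric positive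
definite matrix `T` agreeing with `S` on the diagonal and on the edges of `G`. -/
theorem mlt_eq_min_completion (n : ℕ) (G : SimpleGraph (Fin n)) :
    mlt n (graphModel n G) =
      sInf {d : ℕ | 0 < d ∧
        ∀ᵐ X : Fin n → Fin d → ℝ ∂volume,
          ∃ T : Matrix (Fin n) (Fin n) ℝ, T.PosDef ∧
            (∀ i, T i i = (Matrix.of X * (Matrix.of X)ᵀ) i i) ∧
            (∀ i j, G.Adj i j → T i j = (Matrix.of X * (Matrix.of X)ᵀ) i j)} := by
  rw [graphModel_eq_linearModel,
    mlt_eq_min_completion_general n _ ⟨1, one_mem_linearModel_edgeSubmodule G⟩]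
  simp only [exists_posDef_completion_iff (isSymm_mul_transpose _)]
end
end

section
/- (Blekherman–Sinn) The maximum likelihood threshold of the complete bipartite graph K_{5,5} (on 10 vertices) equals 4. -/
open MeasureTheory Matrix

noncomputable section

/-- The complete bipartite graph `K_{5,5}` on vertex set `Fin 10`, with parts
`{0,…,4}` and `{5,…,9}`. -/
def K55 : SimpleGraph (Fin 10) :=
  SimpleGraph.fromRel (fun i j => i.val < 5 ∧ 5 ≤ j.val)

/-!
By convex duality, the likelihood attains its maximum unless some nonzero positive semidefinite
matrix `N` with the zero pattern of `G` satisfies `N * X = 0`. Suppose that `G` is bipartite, with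
signs `s i = ±1` on its two sides. Comparing entries, `diagonal s * N + N * diagonal s` is twice the
diagonal matrix with entries `s i * N i i`, so `N * X = 0` gives the linear relation
`∑ i, s i * N i i • xᵢ xᵢᵀ = 0` between the squares of the rows of `X`. For generic `X` with at most
`(d + 1).choose 2` rows there is none, which settles `d = 4` for ten vertices.

Conversely, a relation `∑ i, c i • xᵢ xᵢᵀ = 0` whose coefficients are positive on one side and
negative on the other produces such an `N` when `G` is complete bipartite. If the squares of the
rows span all quadratic forms, the relation survives small perturbations of `X`, so the maximum
fails to exist on an open set. For `d = 3`, one explicit relation with five coefficients of each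
sign is enough.
-/

section PosSemidef

variable {ι : Type*} [Fintype ι] {K N : Matrix ι ι ℝ}

open scoped MatrixOrder in
lemma exists_eq_conjTranspose_mul_self_of_posSemidef (hN : N.PosSemidef) :
    ∃ B : Matrix ι ι ℝ, N = Bᴴ * B := by
  classical exact CStarAlgebra.nonneg_iff_eq_star_mul_self.mp hN.nonneg

lemma det_one_add_eq_prod_eigenvalues [DecidableEq ι] (hN : N.IsHermitian) :
    (1 + N).det = ∏ i, (1 + hN.eigenvalues i) := by
  have h := congrArg (Polynomial.eval (-1)) hN.charpoly_eq
  have hneg : scalar ι (-1 : ℝ) - N = -(1 + N) := by rw [map_neg, map_one, neg_add']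
  have hfactor (i : ι) : (-1 : ℝ) - hN.eigenvalues i = -(1 + hN.eigenvalues i) := by ring
  rw [eval_charpoly, hneg, det_neg, Polynomial.eval_prod] at h
  simp only [RCLike.ofReal_real_eq_id, id_eq, Polynomial.eval_sub, Polynomial.eval_X,
    Polynomial.eval_C, hfactor, Finset.prod_neg, Finset.card_univ] at h
  exact mul_left_cancel₀ (pow_ne_zero _ (neg_ne_zero.mpr one_ne_zero)) h

lemma one_lt_det_one_add [DecidableEq ι] (hN : N.PosSemidef) (hN0 : N ≠ 0) :
    1 < (1 + N).det := by
  obtain ⟨i, hi⟩ := Function.ne_iff.mp (mt hN.1.eigenvalues_eq_zero_iff.mp hN0)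
  have hone_le (j : ι) : 1 ≤ 1 + hN.1.eigenvalues j :=
    le_add_of_nonneg_right (hN.eigenvalues_nonneg j)
  have hone_lt : 1 < 1 + hN.1.eigenvalues i :=
    lt_add_of_pos_right 1 ((hN.eigenvalues_nonneg i).lt_of_ne' hi)
  calc (1 : ℝ) = ∏ _j : ι, (1 : ℝ) := Finset.prod_const_one.symm
    _ < ∏ j, (1 + hN.1.eigenvalues j) :=
        Finset.prod_lt_prod (fun _ _ => one_pos) (fun j _ => hone_le j)
          ⟨i, Finset.mem_univ i, hone_lt⟩
    _ = (1 + N).det := (det_one_add_eq_prod_eigenvalues hN.1).symm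

lemma det_lt_det_add [DecidableEq ι] (hK : K.PosDef) (hN : N.PosSemidef) (hN0 : N ≠ 0) :
    K.det < (K + N).det := by
  obtain ⟨C, hC⟩ := exists_eq_conjTranspose_mul_self_of_posSemidef hK.posSemidef
  have hCu : IsUnit C := by
    refine (isUnit_iff_isUnit_det C).mpr (right_ne_zero_of_mul (a := Cᴴ.det) ?_).isUnit
    rw [← det_mul, ← hC]
    exact hK.det_pos.ne'
  have hCd : IsUnit C.det := (isUnit_iff_isUnit_det C).mp hCu
  set N' := C⁻¹ᴴ * N * C⁻¹ with hN'
  have hNN' : N = Cᴴ * N' * C := by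
    have hC' : Cᴴ * C⁻¹ᴴ = 1 := by
      rw [← conjTranspose_mul, nonsing_inv_mul C hCd, conjTranspose_one]
    rw [hN', ← Matrix.mul_assoc, ← Matrix.mul_assoc, hC', one_mul, Matrix.mul_assoc,
      nonsing_inv_mul C hCd, mul_one]
  have hN'0 : N' ≠ 0 := fun h => hN0 (by rw [hNN', h, mul_zero, zero_mul])
  have hdet : (K + N).det = K.det * (1 + N').det := by
    have hsum : K + N = Cᴴ * (1 + N') * C := by rw [mul_add, mul_one, add_mul, ← hC, ← hNN']
    rw [hsum, hC, det_mul, det_mul, det_mul]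
    ring
  rw [hdet]
  exact lt_mul_of_one_lt_right hK.det_pos
    (one_lt_det_one_add (hN.conjTranspose_mul_mul_same C⁻¹) hN'0)

lemma abs_apply_le_trace (hN : N.PosSemidef) (i j : ι) : |N i j| ≤ N.trace := by
  classical
  have hdiag (k : ι) : N k k ≤ N.trace :=
    Finset.single_le_sum (f := fun k => N k k) (fun k _ => hN.diag_nonneg) (Finset.mem_univ k)
  have hsymm : N j i = N i j := by simpa using hN.1.apply i j
  have hquad (s : ℝ) : 0 ≤ N i i + 2 * s * N i j + s ^ 2 * N j j := by
    have h := hN.dotProduct_mulVec_nonneg (Pi.single i 1 + s • Pi.single j 1)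
    simp [mulVec_add, mulVec_smul, add_dotProduct, hsymm] at h
    linarith
  rw [abs_le]
  constructor <;> linarith [hdiag i, hdiag j, hquad 1, hquad (-1)]

lemma isClosed_setOf_posSemidef_s8 {ι : Type*} [Finite ι] :
    IsClosed {N : Matrix ι ι ℝ | N.PosSemidef} := by
  cases nonempty_fintype ι
  simp only [posSemidef_iff_dotProduct_mulVec, IsHermitian, Set.ofPred_and, Set.ofPred_forall]
  exact (isClosed_eq (by fun_prop) (by fun_prop)).inter
    (isClosed_iInter fun x => isClosed_le (by fun_prop) (by fun_prop))

lemma isCompact_setOf_posSemidef_and_trace_le (T : ℝ) :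
    IsCompact {N : Matrix ι ι ℝ | N.PosSemidef ∧ N.trace ≤ T} := by
  have hbox : IsCompact (Set.univ.pi fun _ : ι => Set.univ.pi fun _ : ι => Set.Icc (-T) T) :=
    isCompact_univ_pi fun _ => isCompact_univ_pi fun _ => isCompact_Icc
  have htrace : IsClosed {N : Matrix ι ι ℝ | N.trace ≤ T} :=
    isClosed_le (by fun_prop) (by fun_prop)
  refine hbox.of_isClosed_subset (isClosed_setOf_posSemidef_s8.inter htrace) ?_
  rintro N ⟨hN, hT⟩ i - j -
  exact abs_le.mp ((abs_apply_le_trace hN i j).trans hT)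

lemma log_det_le [DecidableEq ι] (hK : K.PosDef) {ε : ℝ} (hε : 0 < ε) :
    Real.log K.det ≤ ε * K.trace - Fintype.card ι * (1 + Real.log ε) := by
  have hpos := hK.eigenvalues_pos
  have hdet : K.det = ∏ i, hK.1.eigenvalues i := hK.1.det_eq_prod_eigenvalues
  have htrace : K.trace = ∑ i, hK.1.eigenvalues i := hK.1.trace_eq_sum_eigenvalues
  rw [hdet, htrace, Real.log_prod fun i _ => (hpos i).ne']
  calc ∑ i, Real.log (hK.1.eigenvalues i)
      ≤ ∑ i, (ε * hK.1.eigenvalues i - (1 + Real.log ε)) := by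
        gcongr with i
        have h := Real.log_le_sub_one_of_pos (mul_pos hε (hpos i))
        rw [Real.log_mul hε.ne' (hpos i).ne'] at h
        linarith
    _ = ε * ∑ i, hK.1.eigenvalues i - Fintype.card ι * (1 + Real.log ε) := by
        rw [Finset.sum_sub_distrib, Finset.mul_sum, Finset.sum_const, Finset.card_univ,
          nsmul_eq_mul]

end PosSemidef

section LinearConcentrationModel

variable {ι : Type*} [Fintype ι]

lemma exists_pos_mul_trace_le_trace_mul {L : Submodule ℝ (Matrix ι ι ℝ)} {S : Matrix ι ι ℝ}
    (hS : ∀ N ∈ L, N.PosSemidef → N ≠ 0 → 0 < (S * N).trace) :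
    ∃ c > 0, ∀ N ∈ L, N.PosSemidef → c * N.trace ≤ (S * N).trace := by
  have hcompact : IsCompact
      ({N : Matrix ι ι ℝ | N.PosSemidef ∧ N.trace ≤ 1} ∩ ({N | N.trace = 1} ∩ L)) :=
    (isCompact_setOf_posSemidef_and_trace_le 1).inter_right
      ((isClosed_eq (by fun_prop) (by fun_prop)).inter L.closed_of_finiteDimensional)
  obtain ⟨c, hc, hle⟩ := hcompact.exists_forall_le' (f := fun N => (S * N).trace) (by fun_prop)
    fun N ⟨⟨hN, _⟩, htrace, hNL⟩ => hS N hNL hN fun h0 => by simp [h0] at htrace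
  refine ⟨c, hc, fun N hNL hN => ?_⟩
  rcases hN.trace_nonneg.eq_or_lt with htrace | htrace
  · rw [hN.trace_eq_zero_iff.mp htrace.symm]
    simp
  · have hnormalized : (N.trace⁻¹ • N).trace = 1 := by
      rw [trace_smul, smul_eq_mul, inv_mul_cancel₀ htrace.ne']
    have h := hle (N.trace⁻¹ • N) ⟨⟨hN.smul (inv_nonneg.mpr htrace.le), hnormalized.le⟩,
      hnormalized, L.smul_mem _ hNL⟩
    rwa [mul_smul_comm, trace_smul, smul_eq_mul, ← div_eq_inv_mul, le_div_iff₀ htrace] at h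

variable {n : ℕ}

/-- The set of positive definite matrices in a linear space `L` of matrices, that is, the
Gaussian model whose concentration matrices are constrained to lie in `L`. -/
def linearConcentrationModel (L : Submodule ℝ (Matrix (Fin n) (Fin n) ℝ)) :
    Set (Matrix (Fin n) (Fin n) ℝ) :=
  {K | K.PosDef ∧ K ∈ L}

/-- Existence of a maximum likelihood estimate in the model `M` for the sample covariance
matrix `S`. -/
def HasMLE (M : Set (Matrix (Fin n) (Fin n) ℝ)) (S : Matrix (Fin n) (Fin n) ℝ) : Prop :=
  ∃ K ∈ M, ∀ K' ∈ M, mlObjective S K ≤ mlObjective S K'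

variable {L : Submodule ℝ (Matrix (Fin n) (Fin n) ℝ)} {S : Matrix (Fin n) (Fin n) ℝ}

lemma trace_mul_pos_of_hasMLE (h : HasMLE (linearConcentrationModel L) S)
    {N : Matrix (Fin n) (Fin n) ℝ} (hNL : N ∈ L) (hN : N.PosSemidef) (hN0 : N ≠ 0) :
    0 < (S * N).trace := by
  obtain ⟨K, ⟨hK, hKL⟩, hmin⟩ := h
  have hle := hmin (K + N) ⟨hK.add_posSemidef hN, L.add_mem hKL hNL⟩
  have hlog := Real.log_lt_log hK.det_pos (det_lt_det_add hK hN hN0)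
  rw [mlObjective, mlObjective, mul_add, trace_add] at hle
  linarith

lemma exists_trace_le_and_exp_neg_le_det_of_mlObjective_le
    (hS : ∀ N ∈ L, N.PosSemidef → N ≠ 0 → 0 < (S * N).trace) (b : ℝ) :
    ∃ T, ∀ K ∈ linearConcentrationModel L, mlObjective S K ≤ b →
      K.trace ≤ T ∧ Real.exp (-b) ≤ K.det := by
  obtain ⟨c, hc, hcoercive⟩ := exists_pos_mul_trace_le_trace_mul hS
  refine ⟨(b - n * (1 + Real.log (c / 2))) / (c / 2), fun K ⟨hK, hKL⟩ hb => ⟨?_, ?_⟩⟩ <;>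
    have htrace := hcoercive K hKL hK.posSemidef <;> rw [mlObjective] at hb
  · have hlog := log_det_le hK (half_pos hc)
    rw [Fintype.card_fin] at hlog
    rw [le_div_iff₀ (half_pos hc)]
    linarith
  · rw [← Real.le_log_iff_exp_le hK.det_pos]
    linarith [mul_nonneg hc.le hK.posSemidef.trace_nonneg]

lemma hasMLE_of_forall_trace_mul_pos {K₀ : Matrix (Fin n) (Fin n) ℝ}
    (hK₀ : K₀ ∈ linearConcentrationModel L)
    (hS : ∀ N ∈ L, N.PosSemidef → N ≠ 0 → 0 < (S * N).trace) :
    HasMLE (linearConcentrationModel L) S := by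
  set b := mlObjective S K₀
  obtain ⟨T, hT⟩ := exists_trace_le_and_exp_neg_le_det_of_mlObjective_le hS b
  set D := {K : Matrix (Fin n) (Fin n) ℝ | K.PosSemidef ∧ K.trace ≤ T} ∩
    ({K | Real.exp (-b) ≤ K.det} ∩ L)
  have hdet_pos : ∀ K ∈ D, 0 < K.det := fun K hK => (Real.exp_pos _).trans_le hK.2.1
  have hDmodel : D ⊆ linearConcentrationModel L := fun K hK =>
    ⟨hK.1.1.posDef_iff_isUnit.mpr
      ((isUnit_iff_isUnit_det K).mpr (hdet_pos K hK).ne'.isUnit), hK.2.2⟩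
  have hsublevel : ∀ K ∈ linearConcentrationModel L, mlObjective S K ≤ b → K ∈ D :=
    fun K hK hKb => ⟨⟨hK.1.posSemidef, (hT K hK hKb).1⟩, (hT K hK hKb).2, hK.2⟩
  have hcompact : IsCompact D := (isCompact_setOf_posSemidef_and_trace_le T).inter_right
    ((isClosed_le (by fun_prop) (by fun_prop)).inter L.closed_of_finiteDimensional)
  have hcont : ContinuousOn (mlObjective S) D := by
    unfold mlObjective
    exact ContinuousOn.sub (by fun_prop)
      (ContinuousOn.log (by fun_prop) fun K hK => (hdet_pos K hK).ne')
  have hK₀D : K₀ ∈ D := hsublevel K₀ hK₀ le_rfl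
  obtain ⟨K, hKD, hmin⟩ := hcompact.exists_isMinOn ⟨K₀, hK₀D⟩ hcont
  refine ⟨K, hDmodel hKD, fun K' hK' => ?_⟩
  rcases le_total (mlObjective S K') b with hle | hge
  · exact hmin (hsublevel K' hK' hle)
  · exact (hmin hK₀D).trans hge

theorem hasMLE_linearConcentrationModel_iff (hL : (linearConcentrationModel L).Nonempty) :
    HasMLE (linearConcentrationModel L) S ↔
      ∀ N ∈ L, N.PosSemidef → N ≠ 0 → 0 < (S * N).trace :=
  ⟨fun h _ hNL hN hN0 => trace_mul_pos_of_hasMLE h hNL hN hN0,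
    fun hS => hL.elim fun _ hK₀ => hasMLE_of_forall_trace_mul_pos hK₀ hS⟩

end LinearConcentrationModel

section SampleMatrix

variable {ι κ : Type*} [Fintype ι] [Fintype κ]

lemma trace_mul_pos_iff_mul_ne_zero {N : Matrix ι ι ℝ} (hN : N.PosSemidef) (X : Matrix ι κ ℝ) :
    0 < (X * Xᵀ * N).trace ↔ N * X ≠ 0 := by
  obtain ⟨B, rfl⟩ := exists_eq_conjTranspose_mul_self_of_posSemidef hN
  have htrace : (X * Xᵀ * (Bᴴ * B)).trace = ((B * X)ᴴ * (B * X)).trace := by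
    rw [← conjTranspose_eq_transpose_of_trivial, Matrix.mul_assoc, trace_mul_comm,
      conjTranspose_mul]
    simp only [Matrix.mul_assoc]
  have hnonneg : 0 ≤ ((B * X)ᴴ * (B * X)).trace :=
    (posSemidef_conjTranspose_mul_self (B * X)).trace_nonneg
  rw [htrace, hnonneg.lt_iff_ne', ne_eq, trace_conjTranspose_mul_self_eq_zero_iff]
  exact (conjTranspose_mul_self_mul_eq_zero B X).not.symm

variable {n : ℕ}

/-- The space of matrices whose off-diagonal entries vanish at the non-edges of `G`; its
elements are not required to be symmetric. -/
def graphPattern {V : Type*} (G : SimpleGraph V) : Submodule ℝ (Matrix V V ℝ) where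
  carrier := {N | ∀ i j, i ≠ j → ¬ G.Adj i j → N i j = 0}
  add_mem' hM hN i j hij hG := by simp [hM i j hij hG, hN i j hij hG]
  zero_mem' _ _ _ _ := rfl
  smul_mem' c N hN i j hij hG := by simp [hN i j hij hG]

theorem hasMLE_graphModel_iff (G : SimpleGraph (Fin n)) (X : Matrix (Fin n) κ ℝ) :
    HasMLE (graphModel n G) (X * Xᵀ) ↔
      ∀ N ∈ graphPattern G, N.PosSemidef → N * X = 0 → N = 0 := by
  have hone : 1 ∈ graphModel n G := ⟨.one, fun i j hij _ => one_apply_ne hij⟩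
  refine (hasMLE_linearConcentrationModel_iff (L := graphPattern G) ⟨1, hone⟩).trans ?_
  refine forall₃_congr fun N _ hN => ?_
  rw [trace_mul_pos_iff_mul_ne_zero hN]
  exact not_imp_not

end SampleMatrix

section Generic

lemma ae_ne_zero_of_analyticOnNhd_real {g : ℝ → ℝ} (hg : AnalyticOnNhd ℝ g Set.univ) {t₀ : ℝ}
    (ht₀ : g t₀ ≠ 0) : ∀ᵐ t, g t ≠ 0 := by
  have h := ae_restrict_le_codiscreteWithin (μ := volume) MeasurableSet.univ
    (hg.preimage_zero_mem_codiscrete ht₀)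
  rwa [Measure.restrict_univ] at h

theorem ae_ne_zero_of_analyticOnNhd {E : Type*} [NormedAddCommGroup E] [NormedSpace ℝ E]
    [FiniteDimensional ℝ E] [MeasurableSpace E] [BorelSpace E] (μ : Measure E)
    [μ.IsAddHaarMeasure] {f : E → ℝ} (hf : AnalyticOnNhd ℝ f Set.univ) {x₀ : E} (hx₀ : f x₀ ≠ 0) :
    ∀ᵐ x ∂μ, f x ≠ 0 := by
  have hline (x : E) : ∀ᵐ t : ℝ, f (x₀ + t • x) ≠ 0 := by
    refine ae_ne_zero_of_analyticOnNhd_real (t₀ := 0) (hf.comp ?_ (Set.mapsTo_univ _ _))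
      (by simpa using hx₀)
    exact analyticOnNhd_const.add (analyticOnNhd_id.smul analyticOnNhd_const)
  have hmeas : MeasurableSet {p : E × ℝ | f (x₀ + p.2 • p.1) ≠ 0} := by
    have hcont : Continuous f := continuousOn_univ.mp hf.continuousOn
    exact (isOpen_ne_fun (by fun_prop) continuous_const).measurableSet
  have hswap : ∀ᵐ t : ℝ, ∀ᵐ x ∂μ, f (x₀ + t • x) ≠ 0 :=
    (Measure.ae_ae_comm hmeas).mp (.of_forall hline)
  obtain ⟨t, ht, ht0⟩ := (hswap.and (Measure.ae_ne volume (0 : ℝ))).exists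
  have hqmp := (Measure.quasiMeasurePreserving_smul μ (inv_ne_zero ht0)).comp
    (quasiMeasurePreserving_add_left μ (-x₀))
  filter_upwards [hqmp.ae ht] with x hx
  simpa [smul_inv_smul₀ ht0] using hx

variable {m n : Type*}

lemma linearIndependent_row_iff_forall_vecMul_eq_zero [Fintype m] {R : Type*} [Ring R]
    {A : Matrix m n R} :
    LinearIndependent R A.row ↔ ∀ v : m → R, v ᵥ* A = 0 → v = 0 := by
  rw [← vecMul_injective_iff]
  exact injective_iff_map_eq_zero A.vecMulLinear

lemma linearIndependent_row_iff_det_mul_transpose_ne_zero [Fintype m] [DecidableEq m]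
    [Fintype n] {A : Matrix m n ℝ} : LinearIndependent ℝ A.row ↔ (A * Aᵀ).det ≠ 0 := by
  rw [linearIndependent_row_iff_forall_vecMul_eq_zero, ← isUnit_iff_ne_zero,
    ← isUnit_iff_isUnit_det, ← linearIndependent_rows_iff_isUnit,
    linearIndependent_row_iff_forall_vecMul_eq_zero]
  simp only [← conjTranspose_eq_transpose_of_trivial, vecMul_self_mul_conjTranspose_eq_zero]

theorem ae_linearIndependent_row [Finite m] [Finite n] {E : Type*} [NormedAddCommGroup E]
    [NormedSpace ℝ E] [FiniteDimensional ℝ E] [MeasurableSpace E] [BorelSpace E] (μ : Measure E)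
    [μ.IsAddHaarMeasure] {A : E → Matrix m n ℝ}
    (hA : ∀ i j, AnalyticOnNhd ℝ (fun x => A x i j) Set.univ) {x₀ : E}
    (hx₀ : LinearIndependent ℝ (A x₀).row) : ∀ᵐ x ∂μ, LinearIndependent ℝ (A x).row := by
  cases nonempty_fintype m
  cases nonempty_fintype n
  classical
  simp only [linearIndependent_row_iff_det_mul_transpose_ne_zero] at hx₀ ⊢
  refine ae_ne_zero_of_analyticOnNhd μ (f := fun x => (A x * (A x)ᵀ).det) ?_ hx₀
  simp only [det_apply', mul_apply, transpose_apply]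
  refine Finset.analyticOnNhd_fun_sum _ fun σ _ => analyticOnNhd_const.mul ?_
  refine Finset.analyticOnNhd_fun_prod _ fun i _ => Finset.analyticOnNhd_fun_sum _ fun k _ => ?_
  exact (hA _ k).mul (hA _ k)

end Generic

section Veronese

variable {V κ R : Type*} [CommSemiring R]

/-- The matrix whose `i`-th row lists the quadratic monomials `X i p * X i q`, indexed by the
unordered pairs `s(p, q)`, in the `i`-th row of `X`. Its rows are the points of the quadratic
Veronese variety above the rows of `X`. -/
def veroneseMatrix (X : Matrix V κ R) : Matrix V (Sym2 κ) R :=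
  of fun i z => (z.map (X i)).mul

lemma veroneseMatrix_apply_mk (X : Matrix V κ R) (i : V) (p q : κ) :
    veroneseMatrix X i s(p, q) = X i p * X i q :=
  rfl

lemma vecMul_veroneseMatrix_eq_zero_iff [Fintype V] [DecidableEq V] (c : V → R)
    (X : Matrix V κ R) : c ᵥ* veroneseMatrix X = 0 ↔ Xᵀ * diagonal c * X = 0 := by
  have hentry (p q : κ) :
      (c ᵥ* veroneseMatrix X) s(p, q) = (Xᵀ * diagonal c * X) p q := by
    rw [mul_apply, vecMul, dotProduct]
    refine Finset.sum_congr rfl fun i _ => ?_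
    rw [veroneseMatrix_apply_mk, mul_diagonal, transpose_apply]
    ring
  constructor
  · intro h
    ext p q
    rw [← hentry, h, Pi.zero_apply, Matrix.zero_apply]
  · intro h
    ext z
    induction z with | h p q => rw [hentry, h, Matrix.zero_apply, Pi.zero_apply]

variable [DecidableEq κ]

variable (κ) in
/-- The vectors `e p` and `e p + e q`, indexed by the unordered pairs `s(p, p)` and `s(p, q)`.
They impose independent conditions on quadratic forms. -/
def sym2Frame : Matrix (Sym2 κ) κ ℝ :=
  of fun z p => if p ∈ z then 1 else 0

lemma veroneseMatrix_sym2Frame_apply_mk (z : Sym2 κ) (p q : κ) :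
    veroneseMatrix (sym2Frame κ) z s(p, q) = if p ∈ z ∧ q ∈ z then 1 else 0 := by
  simp only [veroneseMatrix_apply_mk, sym2Frame, of_apply, mul_ite, mul_one, mul_zero, ite_and]
  split_ifs <;> rfl

lemma linearIndependent_row_veroneseMatrix_sym2Frame [Finite κ] :
    LinearIndependent ℝ (veroneseMatrix (sym2Frame κ)).row := by
  cases nonempty_fintype κ
  refine linearIndependent_row_iff_forall_vecMul_eq_zero.mpr fun c hc => ?_
  have hsum (p q : κ) : ∑ z, c z * (if p ∈ z ∧ q ∈ z then 1 else 0) = 0 := by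
    simpa only [vecMul, dotProduct, veroneseMatrix_sym2Frame_apply_mk, Pi.zero_apply]
      using congrFun hc s(p, q)
  have hoff (p q : κ) (hpq : p ≠ q) : c s(p, q) = 0 := by
    simpa [Sym2.mem_and_mem_iff hpq] using hsum p q
  ext z
  induction z with | h p q => ?_
  rcases ne_or_eq p q with hpq | rfl
  · exact hoff p q hpq
  · rw [Pi.zero_apply, ← hsum p p, Finset.sum_eq_single s(p, p)]
    · simp
    · intro z _ hz
      by_cases hpz : p ∈ z
      · obtain ⟨q, rfl⟩ := hpz
        rw [hoff p q (by rintro rfl; exact hz rfl), zero_mul]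
      · simp [hpz]
    · simp

lemma linearIndependent_col_veroneseMatrix_of_forall_exists_row_eq [Finite κ]
    {X : Matrix V κ ℝ} (hX : ∀ z, ∃ i, X i = sym2Frame κ z) :
    LinearIndependent ℝ (veroneseMatrix X).col := by
  choose φ hφ using hX
  have hrows : (veroneseMatrix X).submatrix φ id = veroneseMatrix (sym2Frame κ) := by
    ext z w
    simp only [submatrix_apply, id_eq, veroneseMatrix, of_apply, hφ]
  have hframe : LinearIndependent ℝ (veroneseMatrix (sym2Frame κ)).col :=
    linearIndependent_col_iff_row.mpr linearIndependent_row_veroneseMatrix_sym2Frame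
  rw [← hrows] at hframe
  exact hframe.of_comp (LinearMap.funLeft ℝ ℝ φ)

theorem ae_linearIndependent_row_veroneseMatrix {V κ : Type*} [Fintype V] [Fintype κ]
    (hcard : Fintype.card V ≤ Fintype.card (Sym2 κ)) :
    ∀ᵐ X : V → κ → ℝ, LinearIndependent ℝ (veroneseMatrix (of X)).row := by
  classical
  obtain ⟨φ⟩ := Function.Embedding.nonempty_of_card_le hcard
  refine ae_linearIndependent_row volume (x₀ := fun i => sym2Frame κ (φ i)) (fun i z => ?_)
    (linearIndependent_row_veroneseMatrix_sym2Frame.comp φ φ.injective)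
  induction z with | h p q => ?_
  have hcoord (r : κ) : AnalyticOnNhd ℝ (fun X : V → κ → ℝ => X i r) Set.univ :=
    ((ContinuousLinearMap.proj (R := ℝ) (φ := fun _ : κ => ℝ) r).comp
      (ContinuousLinearMap.proj (R := ℝ) (φ := fun _ : V => κ → ℝ) i)).analyticOnNhd _
  exact (hcoord p).mul (hcoord q)

end Veronese

section Bipartite

variable {V κ : Type*} [Fintype V] {G : SimpleGraph V} {N : Matrix V V ℝ}

lemma transpose_mul_diagonal_mul_eq_zero [DecidableEq V] (hNG : N ∈ graphPattern G)
    (hN : N.IsSymm) {X : Matrix V κ ℝ} (hNX : N * X = 0) {s : V → ℝ}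
    (hs : ∀ i j, G.Adj i j → s i + s j = 0) :
    Xᵀ * diagonal (fun i => s i * N i i) * X = 0 := by
  have hanticomm : diagonal s * N + N * diagonal s = (2 : ℝ) • diagonal fun i => s i * N i i := by
    ext i j
    simp only [Matrix.add_apply, diagonal_mul, mul_diagonal, Matrix.smul_apply, diagonal_apply,
      smul_eq_mul]
    split_ifs with hij
    · subst hij
      ring
    · by_cases hG : G.Adj i j
      · linear_combination N i j * hs i j hG
      · rw [hNG i j hij hG]
        ring
  have hXN : Xᵀ * N = 0 := by
    rw [← hN, ← transpose_mul, hNX, transpose_zero]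
  have htwo : (2 : ℝ) • (Xᵀ * diagonal (fun i => s i * N i i) * X) = 0 := by
    rw [← Matrix.smul_mul, ← Matrix.mul_smul, ← hanticomm, Matrix.mul_add, Matrix.add_mul,
      ← Matrix.mul_assoc Xᵀ N, hXN, Matrix.mul_assoc, Matrix.mul_assoc, hNX]
    simp only [Matrix.mul_zero, Matrix.zero_mul, add_zero]
  exact (smul_eq_zero_iff_right two_ne_zero).mp htwo

lemma exists_sign_of_isBipartite {V : Type*} {G : SimpleGraph V} (hG : G.IsBipartite) :
    ∃ s : V → ℝ, (∀ i, s i ≠ 0) ∧ ∀ i j, G.Adj i j → s i + s j = 0 := by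
  obtain ⟨C⟩ := hG
  refine ⟨fun i => if C i = 0 then 1 else -1, fun i => by dsimp only; split_ifs <;> simp,
    fun i j hij => ?_⟩
  have hne := C.valid hij
  dsimp only
  split_ifs <;> first | omega | simp

lemma eq_zero_of_isBipartite_of_mul_eq_zero (hG : G.IsBipartite) {X : Matrix V κ ℝ}
    (hX : LinearIndependent ℝ (veroneseMatrix X).row) (hNG : N ∈ graphPattern G)
    (hN : N.PosSemidef) (hNX : N * X = 0) : N = 0 := by
  classical
  obtain ⟨s, hs0, hs⟩ := exists_sign_of_isBipartite hG
  have hsymm : N.IsSymm := (conjTranspose_eq_transpose_of_trivial N).symm.trans hN.1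
  have hdiag := linearIndependent_row_iff_forall_vecMul_eq_zero.mp hX _
    ((vecMul_veroneseMatrix_eq_zero_iff _ X).mpr
      (transpose_mul_diagonal_mul_eq_zero hNG hsymm hNX hs))
  refine hN.trace_eq_zero_iff.mp (Finset.sum_eq_zero fun i _ => ?_)
  exact (mul_eq_zero.mp (congrFun hdiag i)).resolve_left (hs0 i)

theorem ae_hasMLE_of_isBipartite {n d : ℕ} {G : SimpleGraph (Fin n)} (hG : G.IsBipartite)
    (hnd : n ≤ (d + 1).choose 2) :
    ∀ᵐ X : Fin n → Fin d → ℝ, HasMLE (graphModel n G) (of X * (of X)ᵀ) := by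
  have hcard : Fintype.card (Fin n) ≤ Fintype.card (Sym2 (Fin d)) := by
    rwa [Sym2.card, Fintype.card_fin, Fintype.card_fin]
  filter_upwards [ae_linearIndependent_row_veroneseMatrix hcard] with X hX
  exact (hasMLE_graphModel_iff G _).mpr fun N hNG hN hNX =>
    eq_zero_of_isBipartite_of_mul_eq_zero hG hX hNG hN hNX

end Bipartite

section SignedRelation

variable {V κ : Type*} [Fintype V]

/- The witness is the `W`-orthogonal projection onto the column space of `X`, read as the quadratic
form `W * X * (Xᴴ * W * X)⁻¹ * (Xᴴ * W) ≤ W`. -/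
lemma exists_posSemidef_mul_eq_mul_of_posDef [Fintype κ] {W : Matrix V V ℝ} {X : Matrix V κ ℝ}
    (hW : W.PosDef) (hX : LinearIndependent ℝ X.col) :
    ∃ B : Matrix V κ ℝ, (B * (Xᴴ * W)).PosSemidef ∧ (W - B * (Xᴴ * W)).PosSemidef ∧
      B * (Xᴴ * W) * X = W * X := by
  classical
  have hR : (Xᴴ * W * X).PosDef := hW.conjTranspose_mul_mul_same (mulVec_injective_iff.mpr hX)
  have : Invertible (Xᴴ * W * X) := hR.isUnit.invertible
  refine ⟨(Xᴴ * W)ᴴ * (Xᴴ * W * X)⁻¹, hR.inv.posSemidef.conjTranspose_mul_mul_same _, ?_, ?_⟩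
  · have hblocks : fromBlocks (Xᴴ * W * X) (Xᴴ * W) (Xᴴ * W)ᴴ W =
        (fromCols X 1)ᴴ * W * fromCols X 1 := by
      rw [conjTranspose_fromCols_eq_fromRows_conjTranspose, fromRows_mul, fromRows_mul_fromCols,
        conjTranspose_mul, conjTranspose_conjTranspose, hW.1]
      simp only [conjTranspose_one, one_mul, mul_one, Matrix.mul_one]
    rw [← hR.fromBlocks₁₁, hblocks]
    exact hW.posSemidef.conjTranspose_mul_mul_same _
  · rw [Matrix.mul_assoc, Matrix.mul_assoc, inv_mul_of_invertible, conjTranspose_mul,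
      conjTranspose_conjTranspose, hW.1, Matrix.mul_one]

/- With `W = |diagonal c|` and `S` the diagonal matrix of signs, the relation says that the columns
of `X` and `S * X` are `W`-orthogonal, so the form `P` of the `W`-orthogonal projection onto the
columns of `X` kills `S * X`. Conjugation by `S` preserves the entries of `P` between vertices of
equal sign, so there `N = W - P + Sᴴ * P * S` agrees with the diagonal matrix `W`. -/
theorem exists_posSemidef_mul_eq_zero_of_signed_relation [DecidableEq V] [Nonempty V] [Finite κ]
    {G : SimpleGraph V} {X : Matrix V κ ℝ} {c : V → ℝ} (hX : LinearIndependent ℝ X.col)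
    (hcX : Xᵀ * diagonal c * X = 0) (hc : ∀ i j, ¬ G.Adj i j → 0 < c i * c j) :
    ∃ N ∈ graphPattern G, N.PosSemidef ∧ N * X = 0 ∧ N ≠ 0 := by
  cases nonempty_fintype κ
  have hc_self (i : V) : 0 < c i * c i := hc i i (G.loopless.irrefl i)
  have hc0 (i : V) : c i ≠ 0 := left_ne_zero_of_mul (hc_self i).ne'
  set W : Matrix V V ℝ := diagonal fun i => |c i| with hWdef
  set S : Matrix V V ℝ := diagonal fun i => (SignType.sign (c i) : ℝ) with hSdef
  obtain ⟨B, hP, hWP, hPX⟩ := exists_posSemidef_mul_eq_mul_of_posDef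
    (W := W) (.diagonal fun i => abs_pos.mpr (hc0 i)) hX
  have hWS : W * S = diagonal c := by
    simp only [W, S, diagonal_mul_diagonal, abs_mul_sign]
  set P := B * (Xᴴ * W) with hPdef
  have hPSX : P * (S * X) = 0 := by
    have hassoc : P * (S * X) = B * (Xᴴ * (W * S) * X) := by simp only [hPdef, Matrix.mul_assoc]
    rw [hassoc, hWS, conjTranspose_eq_transpose_of_trivial, hcX, Matrix.mul_zero]
  have hNapply (i j : V) (hij : 0 < c i * c j) : (W - P + Sᴴ * P * S) i j = W i j := by
    have hsign : (SignType.sign (c i) * SignType.sign (c j) : ℝ) = 1 := by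
      rw [← SignType.coe_mul, ← sign_mul, sign_pos hij, SignType.coe_one]
    have hSPS : (Sᴴ * P * S) i j = P i j := by
      rw [hSdef, diagonal_conjTranspose, mul_diagonal, diagonal_mul]
      linear_combination P i j * hsign
    rw [Matrix.add_apply, Matrix.sub_apply, hSPS, sub_add_cancel]
  refine ⟨W - P + Sᴴ * P * S, fun i j hij hG => ?_, hWP.add (hP.conjTranspose_mul_mul_same S),
    ?_, fun h => ?_⟩
  · rw [hNapply i j (hc i j hG), hWdef, diagonal_apply_ne _ hij]
  · rw [Matrix.add_mul, Matrix.sub_mul, hPX, sub_self, zero_add, Matrix.mul_assoc,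
      Matrix.mul_assoc, hPSX, Matrix.mul_zero]
  · obtain ⟨i⟩ := ‹Nonempty V›
    have hi := hNapply i i (hc_self i)
    rw [h, hWdef, diagonal_apply_eq] at hi
    exact hc0 i (abs_eq_zero.mp hi.symm)

end SignedRelation

section Perturbation

open scoped Topology

lemma eventually_exists_mulVec_eq_zero {Y m n : Type*} [TopologicalSpace Y] [Finite m]
    [Fintype n] {A : Y → Matrix m n ℝ} {y₀ : Y} (hA : ContinuousAt A y₀)
    (hrow : LinearIndependent ℝ (A y₀).row) {w₀ : n → ℝ} (hw₀ : A y₀ *ᵥ w₀ = 0)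
    {U : Set (n → ℝ)} (hU : U ∈ 𝓝 w₀) : ∀ᶠ y in 𝓝 y₀, ∃ w ∈ U, A y *ᵥ w = 0 := by
  classical
  cases nonempty_fintype m
  have hdet : (A y₀ * (A y₀)ᵀ).det ≠ 0 :=
    linearIndependent_row_iff_det_mul_transpose_ne_zero.mp hrow
  have hgram : ContinuousAt (fun y => A y * (A y)ᵀ) y₀ := by fun_prop
  -- the orthogonal projection of `w₀` onto the kernel of `A y`
  let w (y : Y) : n → ℝ := w₀ - (A y)ᵀ *ᵥ ((A y * (A y)ᵀ)⁻¹ *ᵥ (A y *ᵥ w₀))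
  have hw : ContinuousAt w y₀ := by
    have hinv : ContinuousAt (fun y => (A y * (A y)ᵀ)⁻¹) y₀ := by
      refine (continuousAt_matrix_inv _ ?_).comp hgram
      rw [Ring.inverse_eq_inv']
      exact continuousAt_inv₀ hdet
    fun_prop
  have hwy₀ : w y₀ = w₀ := by simp only [w, hw₀, mulVec_zero, sub_zero]
  have hdet_near : ∀ᶠ y in 𝓝 y₀, (A y * (A y)ᵀ).det ≠ 0 :=
    ContinuousAt.eventually_ne (by fun_prop) hdet
  filter_upwards [hw.preimage_mem_nhds (hwy₀.symm ▸ hU), hdet_near] with y hwU hy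
  refine ⟨w y, hwU, ?_⟩
  rw [mulVec_sub, mulVec_mulVec, mulVec_mulVec, mul_nonsing_inv _ hy.isUnit, one_mulVec, sub_self]

lemma linearIndependent_col_of_linearIndependent_col_veroneseMatrix {V κ : Type*} {X : Matrix V κ ℝ}
    (hX : LinearIndependent ℝ (veroneseMatrix X).col) : LinearIndependent ℝ X.col := by
  rcases isEmpty_or_nonempty κ with _ | ⟨⟨q⟩⟩
  · exact linearIndependent_empty_type
  · have hinj : Function.Injective fun p : κ => s(p, q) := fun _ _ => Sym2.congr_left.mp
    exact (hX.comp _ hinj).of_comp (LinearMap.mulRight ℝ (X.col q))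

lemma eventually_exists_signed_relation {V κ : Type*} [Fintype V] [DecidableEq V] [Finite κ]
    {G : SimpleGraph V} {X₀ : V → κ → ℝ} {c₀ : V → ℝ}
    (hX₀ : LinearIndependent ℝ (veroneseMatrix (of X₀)).col)
    (hc₀X₀ : (of X₀)ᵀ * diagonal c₀ * of X₀ = 0) (hc₀ : ∀ i j, ¬ G.Adj i j → 0 < c₀ i * c₀ j) :
    ∀ᶠ X in 𝓝 X₀, ∃ c : V → ℝ, (∀ i j, ¬ G.Adj i j → 0 < c i * c j) ∧
      (of X)ᵀ * diagonal c * of X = 0 := by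
  have hU : {c : V → ℝ | ∀ i j, ¬ G.Adj i j → 0 < c i * c j} ∈ 𝓝 c₀ := by
    simp only [Set.ofPred_forall, Filter.iInter_mem]
    exact fun i j hG => (isOpen_lt continuous_const (by fun_prop)).mem_nhds (hc₀ i j hG)
  have hcont : Continuous fun X : V → κ → ℝ => (veroneseMatrix (of X))ᵀ := by
    refine continuous_matrix fun z i => ?_
    induction z with | h p q => exact (by fun_prop : Continuous fun X : V → κ → ℝ => X i p * X i q)
  have hker : (veroneseMatrix (of X₀))ᵀ *ᵥ c₀ = 0 := by
    rwa [mulVec_transpose, vecMul_veroneseMatrix_eq_zero_iff]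
  filter_upwards [eventually_exists_mulVec_eq_zero hcont.continuousAt hX₀ hker hU]
    with X ⟨c, hc, hcX⟩
  exact ⟨c, hc, (vecMul_veroneseMatrix_eq_zero_iff c _).mp (by rwa [← mulVec_transpose])⟩

lemma eventually_linearIndependent_col {V κ : Type*} [Finite V] [Finite κ] {X₀ : V → κ → ℝ}
    (hX₀ : LinearIndependent ℝ (of X₀).col) : ∀ᶠ X in 𝓝 X₀, LinearIndependent ℝ (of X).col := by
  cases nonempty_fintype V
  exact (show Continuous fun (X : V → κ → ℝ) q i => X i q by fun_prop).continuousAt.eventually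
    hX₀.eventually

theorem not_ae_hasMLE_of_signed_relation {n d : ℕ} [NeZero n] {G : SimpleGraph (Fin n)}
    {X₀ : Fin n → Fin d → ℝ} {c₀ : Fin n → ℝ}
    (hX₀ : LinearIndependent ℝ (veroneseMatrix (of X₀)).col)
    (hc₀X₀ : (of X₀)ᵀ * diagonal c₀ * of X₀ = 0) (hc₀ : ∀ i j, ¬ G.Adj i j → 0 < c₀ i * c₀ j) :
    ¬ ∀ᵐ X : Fin n → Fin d → ℝ, HasMLE (graphModel n G) (of X * (of X)ᵀ) := by
  intro h
  have hrel := eventually_exists_signed_relation hX₀ hc₀X₀ hc₀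
  have hcol := eventually_linearIndependent_col
    (linearIndependent_col_of_linearIndependent_col_veroneseMatrix hX₀)
  obtain ⟨X, hMLE, ⟨c, hc, hcX⟩, hX⟩ :=
    (Measure.dense_of_ae h).inter_nhds_nonempty (hrel.and hcol)
  obtain ⟨N, hNG, hN, hNX, hN0⟩ := exists_posSemidef_mul_eq_zero_of_signed_relation hX hcX hc
  exact hN0 ((hasMLE_graphModel_iff G _).mp hMLE N hNG hN hNX)

end Perturbation

section Threshold

theorem ae_hasMLE_mono {n d e : ℕ} {G : SimpleGraph (Fin n)} (hde : d ≤ e)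
    (h : ∀ᵐ X : Fin n → Fin d → ℝ, HasMLE (graphModel n G) (of X * (of X)ᵀ)) :
    ∀ᵐ X : Fin n → Fin e → ℝ, HasMLE (graphModel n G) (of X * (of X)ᵀ) := by
  let restrict : (Fin n → Fin e → ℝ) →ₗ[ℝ] (Fin n → Fin d → ℝ) :=
    LinearMap.compLeft (LinearMap.funLeft ℝ ℝ (Fin.castLE hde)) (Fin n)
  have hsurj : Function.Surjective restrict :=
    (LinearMap.funLeft_surjective_of_injective ℝ ℝ _ (Fin.castLE_injective hde)).comp_left
  obtain ⟨c, -, hc⟩ := restrict.exists_map_addHaar_eq_smul_addHaar volume volume hsurj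
  have hqmp : Measure.QuasiMeasurePreserving restrict volume volume :=
    ⟨restrict.continuous_of_finiteDimensional.measurable,
      hc ▸ Measure.smul_absolutelyContinuous⟩
  filter_upwards [hqmp.ae h] with X hX
  refine (hasMLE_graphModel_iff G _).mpr fun N hNG hN hNX =>
    (hasMLE_graphModel_iff G _).mp hX N hNG hN ?_
  ext i p
  exact congrFun (congrFun hNX i) (Fin.castLE hde p)

theorem mlt_graphModel_eq_succ_iff {n d : ℕ} {G : SimpleGraph (Fin n)} (hd : 0 < d) :
    mlt n (graphModel n G) = d + 1 ↔
      (∀ᵐ X : Fin n → Fin (d + 1) → ℝ, HasMLE (graphModel n G) (of X * (of X)ᵀ)) ∧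
        ¬ ∀ᵐ X : Fin n → Fin d → ℝ, HasMLE (graphModel n G) (of X * (of X)ᵀ) := by
  refine (Nat.sInf_upward_closed_eq_succ_iff ?_ d).trans ?_
  · exact fun d₁ d₂ hle ⟨hd₁, h⟩ => ⟨hd₁.trans_le hle, ae_hasMLE_mono hle h⟩
  · exact and_congr (and_iff_right d.succ_pos) (and_iff_right hd).not

end Threshold

namespace K55

lemma adj_iff {i j : Fin 10} : K55.Adj i j ↔ ¬ (i.val < 5 ↔ j.val < 5) := by
  rw [K55, SimpleGraph.fromRel_adj, ne_eq, Fin.ext_iff]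
  omega

lemma isBipartite : K55.IsBipartite :=
  ⟨SimpleGraph.Coloring.mk (fun i => if i.val < 5 then 0 else 1) fun {i j} hij => by
    have := adj_iff.mp hij
    split_ifs <;> simp_all⟩

/-- Ten vectors in `ℝ³`, one for each vertex of `K55`, whose squares `⟨v i, ·⟩²` satisfy the
linear relation with coefficients `K55.weights`. -/
def vectors : Fin 10 → Fin 3 → ℝ :=
  ![![1, 0, 0], ![0, 1, 0], ![0, 0, 1], ![1, 0, 1], ![1, 0, -1],
    ![0, 1, 0], ![1, 1, 0], ![1, -1, 0], ![0, 1, 1], ![0, 1, -1]]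

/-- The coefficients of the identity
`2x² + 9y² + 2z² + (x + z)² + (x - z)² = y² + 2((x + y)² + (x - y)² + (y + z)² + (y - z)²)`,
with all terms moved to the left: positive on one side of `K55`, negative on the other. -/
def weights : Fin 10 → ℝ :=
  ![2, 9, 2, 1, 1, -1, -2, -2, -2, -2]

lemma transpose_vectors_mul_diagonal_weights_mul_vectors :
    (of vectors)ᵀ * diagonal weights * of vectors = 0 := by
  ext p q
  rw [mul_apply]
  simp only [mul_diagonal, transpose_apply, of_apply]
  fin_cases p <;> fin_cases q <;> norm_num [vectors, weights, Fin.sum_univ_succ]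

lemma weights_mul_pos {i j : Fin 10} (hij : ¬ K55.Adj i j) : 0 < weights i * weights j := by
  rw [adj_iff, not_not] at hij
  revert hij
  fin_cases i <;> fin_cases j <;> norm_num [weights]

lemma exists_vectors_eq_sym2Frame (z : Sym2 (Fin 3)) : ∃ i, vectors i = sym2Frame (Fin 3) z := by
  induction z with | h p q => ?_
  refine ⟨!![0, 6, 3; 6, 1, 8; 3, 8, 2] p q, ?_⟩
  ext r
  fin_cases p <;> fin_cases q <;> fin_cases r <;> simp [sym2Frame] <;> rfl

end K55

/-- Blekherman–Sinn: the maximum likelihood threshold of `K_{5,5}` equals `4`. -/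
theorem mlt_K55 : mlt 10 (graphModel 10 K55) = 4 := by
  refine (mlt_graphModel_eq_succ_iff three_pos).mpr ⟨?_, ?_⟩
  · exact ae_hasMLE_of_isBipartite K55.isBipartite (by decide)
  · exact not_ae_hasMLE_of_signed_relation
      (linearIndependent_col_veroneseMatrix_of_forall_exists_row_eq K55.exists_vectors_eq_sym2Frame)
      K55.transpose_vectors_mul_diagonal_weights_mul_vectors fun _ _ => K55.weights_mul_pos
end
end
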